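/- arXiv:1306.4913 — 2 statements merged into one kernel-verified Lean document; each statement's English description precedes it below -/
import Mathlib

section
/- Let G be a finite group, H a subgroup of G, and g an element of G. The number of left cosets xH of H in G such that g • (xH) = xH equals (|G| · |{h ∈ H : h is conjugate to g in G}|) / (|H| · |{y ∈ G : y is conjugate to g in G}|). -/
/-!
For a transitive action of `G` on `X` and a point `x : X`, count
`T = {a : G | a * g * a⁻¹ ∈ stabilizer G x}` in two ways. An element `a` lies in `T` exactly when
`g` fixes `a⁻¹ • x`, so `|T|` is `|stabilizer G x|` times the number of fixed points of `g`. The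
fibres of `a ↦ a * g * a⁻¹` are cosets of the centralizer `C` of `g`, so `|T|` is also `|C|` times
the number of conjugates of `g` in the stabilizer. Since `|G|` is `|C|` times the number of all
conjugates of `g`, `|C|` can be eliminated. The theorem is the case `X = G ⧸ H`, where `H` is the
stabilizer of the trivial coset.
-/

open MulAction

section

variable {G X : Type*} [Group G] [MulAction G X]

theorem card_smul_mem (x : X) (S : Set X) :
    Nat.card {a : G // a • x ∈ S} =
      Nat.card (stabilizer G x) * Nat.card (S ∩ orbit G x : Set X) := by
  have range_eq : Set.range (ofQuotientStabilizer G x) = orbit G x :=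
    (Quotient.mk''_surjective.range_comp (ofQuotientStabilizer G x)).symm
  calc
    Nat.card {a : G // a • x ∈ S} =
        Nat.card (stabilizer G x) * Nat.card (ofQuotientStabilizer G x ⁻¹' S) :=
      QuotientGroup.card_preimage_mk _ (ofQuotientStabilizer G x ⁻¹' S)
    _ = Nat.card (stabilizer G x) * Nat.card (S ∩ orbit G x : Set X) := by
      rw [← Nat.card_image_of_injective (injective_ofQuotientStabilizer G x),
        Set.image_preimage_eq_inter_range, range_eq]

theorem card_conj_mem (g : G) (S : Set G) :
    Nat.card {a : G // a * g * a⁻¹ ∈ S} =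
      Nat.card (Subgroup.centralizer {g}) * Nat.card {y : G // y ∈ S ∧ IsConj g y} := by
  have orbit_eq : S ∩ orbit (ConjAct G) g = {y | y ∈ S ∧ IsConj g y} := by
    ext y
    rw [Set.mem_inter_iff, ConjAct.mem_orbit_conjAct, isConj_comm, Set.mem_ofPred_eq]
  have h := card_smul_mem (G := ConjAct G) g S
  rwa [orbit_eq, ← Subgroup.nat_card_centralizer_nat_card_stabilizer] at h

theorem card_centralizer_mul_card_isConj (g : G) :
    Nat.card (Subgroup.centralizer {g}) * Nat.card {y : G // IsConj g y} = Nat.card G := by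
  simpa using (card_conj_mem g Set.univ).symm

theorem conj_mem_stabilizer_iff (g a : G) (x : X) :
    a * g * a⁻¹ ∈ stabilizer G x ↔ a⁻¹ • x ∈ fixedBy X g := by
  rw [mem_stabilizer_iff, mem_fixedBy, mul_smul, mul_smul, smul_eq_iff_eq_inv_smul]

theorem card_stabilizer_mul_card_fixedBy [IsPretransitive G X] (g : G) (x : X) :
    Nat.card (stabilizer G x) * Nat.card (fixedBy X g) =
      Nat.card (Subgroup.centralizer {g}) * Nat.card {h : stabilizer G x // IsConj g (h : G)} :=
  calc
    Nat.card (stabilizer G x) * Nat.card (fixedBy X g) =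
        Nat.card {a : G // a • x ∈ fixedBy X g} := by
      rw [card_smul_mem, orbit_eq_univ, Set.inter_univ]
    _ = Nat.card {a : G // a * g * a⁻¹ ∈ stabilizer G x} :=
      Nat.card_congr <| (Equiv.inv G).subtypeEquiv fun a ↦ by
        rw [conj_mem_stabilizer_iff, Equiv.inv_apply, inv_inv]
    _ = Nat.card (Subgroup.centralizer {g}) *
          Nat.card {y : G // y ∈ stabilizer G x ∧ IsConj g y} :=
      card_conj_mem g (stabilizer G x)
    _ = _ := by
      rw [Nat.card_congr (Equiv.subtypeSubtypeEquivSubtypeInter (· ∈ stabilizer G x) (IsConj g))]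

theorem frobenius_fixed_cosets_general [Finite G] [IsPretransitive G X] (g : G) (x : X) :
    Nat.card (fixedBy X g) =
      (Nat.card G * Nat.card {h : stabilizer G x // IsConj g (h : G)}) /
        (Nat.card (stabilizer G x) * Nat.card {y : G // IsConj g y}) := by
  have : Nonempty {y : G // IsConj g y} := ⟨⟨g, IsConj.refl g⟩⟩
  refine (Nat.div_eq_of_eq_mul_right (Nat.mul_pos Nat.card_pos Nat.card_pos) ?_).symm
  rw [← card_centralizer_mul_card_isConj g, mul_right_comm,
    ← card_stabilizer_mul_card_fixedBy g x, mul_right_comm]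

end

theorem frobenius_fixed_cosets (G : Type*) [Group G] [Finite G] (H : Subgroup G) (g : G) :
    Nat.card {x : G ⧸ H // g • x = x} =
      (Nat.card G * Nat.card {h : H // IsConj g (h : G)}) /
        (Nat.card H * Nat.card {y : G // IsConj g y}) := by
  have h := frobenius_fixed_cosets_general g ((1 : G) : G ⧸ H)
  rwa [stabilizer_quotient] at h
end

section
/- Let n and k be natural numbers with k ≤ n, and let σ be a permutation of Fin n. Then the number of k-element subsets A of Fin n with σ '' A = A equals (n! · |{τ : a permutation of Fin n | τ '' {0,…,k−1} = {0,…,k−1} and τ is conjugate to σ}|) / (k! · (n−k)! · |{τ : a permutation of Fin n | τ is conjugate to σ}|). -/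
/-!
Let `G` act transitively on `X` and let `C` be a conjugacy class of `G`. Count the pairs `(h, x)`
with `h ∈ C` and `h • x = x`. Conjugate elements fix equally many points, and by transitivity every
point is fixed by equally many elements of `C`, so `|C| * |Fix g| = |X| * |C ∩ stabilizer x|` for
`g ∈ C`. Multiplying by `|stabilizer x|` and using `|X| * |stabilizer x| = |G|` gives Frobenius's
formula for the permutation character. For the orbit of a set `S` under `Perm α`, the stabilizer is
the Young subgroup, of order `|S|! * |Sᶜ|!`.
-/

open MulAction Equiv
open scoped Nat Pointwise

section MulAction

variable {G X : Type*} [Group G] [MulAction G X]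

theorem nonempty_fixedBy_equiv_of_isConj {g h : G} (hgh : IsConj g h) :
    Nonempty (fixedBy X g ≃ fixedBy X h) := by
  obtain ⟨c, rfl⟩ := isConj_iff.1 hgh
  rw [← smul_fixedBy]
  exact ⟨(toPerm c).image _⟩

variable [IsPretransitive G X]

theorem nonempty_isConj_mem_stabilizer_equiv (g : G) (x y : X) :
    Nonempty ({h : G // h ∈ stabilizer G x ∧ IsConj h g} ≃
      {h : G // h ∈ stabilizer G y ∧ IsConj h g}) := by
  obtain ⟨c, rfl⟩ := exists_smul_eq G x y
  refine ⟨(MulAut.conj c).toEquiv.subtypeEquiv fun h => and_congr ?_ ?_⟩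
  · simp [mul_smul]
  · have hconj : IsConj h (c * h * c⁻¹) := isConj_iff.2 ⟨c, rfl⟩
    exact ⟨hconj.symm.trans, hconj.trans⟩

theorem card_isConj_mul_card_fixedBy (g : G) (x : X) :
    Nat.card {h : G // IsConj h g} * Nat.card (fixedBy X g) =
      Nat.card X * Nat.card {h : G // h ∈ stabilizer G x ∧ IsConj h g} := by
  have fixedByEquiv (h : {h : G // IsConj h g}) : fixedBy X h.1 ≃ fixedBy X g :=
    (nonempty_fixedBy_equiv_of_isConj h.2).some
  have stabilizingEquiv (y : X) : {h : G // h ∈ stabilizer G y ∧ IsConj h g} ≃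
      {h : G // h ∈ stabilizer G x ∧ IsConj h g} :=
    (nonempty_isConj_mem_stabilizer_equiv g y x).some
  rw [← Nat.card_prod, ← Nat.card_prod]
  exact Nat.card_congr <| calc
    {h : G // IsConj h g} × fixedBy X g
    _ ≃ Σ h : {h : G // IsConj h g}, fixedBy X h.1 := (sigmaEquivProdOfEquiv fixedByEquiv).symm
    _ ≃ Σ y : X, {h : G // h ∈ stabilizer G y ∧ IsConj h g} :=
      { toFun p := ⟨p.2, p.1, p.2.2, p.1.2⟩
        invFun p := ⟨⟨p.2, p.2.2.2⟩, p.1, p.2.2.1⟩ }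
    _ ≃ X × {h : G // h ∈ stabilizer G x ∧ IsConj h g} := sigmaEquivProdOfEquiv stabilizingEquiv

theorem card_fixedBy_eq_div [Finite G] (g : G) (x : X) :
    Nat.card (fixedBy X g) =
      Nat.card G * Nat.card {h : G // h ∈ stabilizer G x ∧ IsConj h g} /
        (Nat.card (stabilizer G x) * Nat.card {h : G // IsConj h g}) := by
  have : Nonempty {h : G // IsConj h g} := ⟨g, .refl g⟩
  refine (Nat.div_eq_of_eq_mul_right (mul_pos Nat.card_pos Nat.card_pos) ?_).symm
  rw [mul_assoc, card_isConj_mul_card_fixedBy g x, ← mul_assoc,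
    ← index_stabilizer_of_transitive G x, Subgroup.card_mul_index]

end MulAction

section Perm

variable {α : Type*} [Finite α]

theorem card_stabilizer_perm_set (S : Set α) :
    Nat.card (stabilizer (Perm α) S) = S.ncard ! * Sᶜ.ncard ! := by
  have hcoe : (stabilizer (Perm α) S : Set (Perm α)) = {g : Perm α | (· ∈ S) ∘ g = (· ∈ S)} := by
    ext g
    rw [SetLike.mem_coe, mem_stabilizer_set]
    simp [funext_iff]
  have hcompl : {a | a ∉ S} = Sᶜ := rfl
  rw [← SetLike.coe_sort_coe, hcoe, Nat.card_coe_set_eq, DomMulAct.stabilizer_ncard]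
  simp [hcompl]

theorem mem_orbit_perm_iff_ncard_eq {S A : Set α} :
    A ∈ orbit (Perm α) S ↔ A.ncard = S.ncard := by
  classical
  constructor
  · rintro ⟨g, rfl⟩
    exact Set.ncard_smul_set g S
  · intro h
    have := Fintype.ofFinite α
    let e : {x // x ∈ S} ≃ {x // x ∈ A} := (Finite.card_eq.1 h.symm).some
    refine ⟨e.extendSubtype, Set.eq_of_subset_of_ncard_le ?_ ?_⟩
    · rintro _ ⟨x, hx, rfl⟩
      exact e.extendSubtype_mem x hx
    · rw [Set.ncard_smul_set, h]

theorem frobenius_induced_character_value_general (S : Set α) (σ : Perm α) :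
    Nat.card {A : Set α // A.ncard = S.ncard ∧ σ '' A = A} =
      ((Nat.card α)! * Nat.card {τ : Perm α // τ '' S = S ∧ IsConj τ σ}) /
        (S.ncard ! * Sᶜ.ncard ! * Nat.card {τ : Perm α // IsConj τ σ}) := by
  let x : orbit (Perm α) S := ⟨S, mem_orbit_self S⟩
  have stabilizer_x : stabilizer (Perm α) x = stabilizer (Perm α) S :=
    Subgroup.ext fun _ => Subtype.ext_iff
  have card_fixedBy_orbit : Nat.card (fixedBy (orbit (Perm α) S) σ) =
      Nat.card {A : Set α // A.ncard = S.ncard ∧ σ '' A = A} := by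
    simp only [← mem_orbit_perm_iff_ncard_eq]
    exact Nat.card_congr ((subtypeEquivRight fun A => Subtype.ext_iff).trans
      (subtypeSubtypeEquivSubtypeInter _ fun A => σ '' A = A))
  rw [← card_fixedBy_orbit, card_fixedBy_eq_div σ x, stabilizer_x, card_stabilizer_perm_set,
    Nat.card_perm]
  rfl

end Perm

theorem frobenius_induced_character_value (n k : ℕ) (hk : k ≤ n) (σ : Equiv.Perm (Fin n)) :
    Nat.card {A : Set (Fin n) // A.ncard = k ∧ σ '' A = A} =
      (n.factorial * Nat.card {τ : Equiv.Perm (Fin n) //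
          τ '' {x : Fin n | (x : ℕ) < k} = {x : Fin n | (x : ℕ) < k} ∧ IsConj τ σ}) /
        (k.factorial * (n - k).factorial *
          Nat.card {τ : Equiv.Perm (Fin n) // IsConj τ σ}) := by
  have hS : {x : Fin n | (x : ℕ) < k}.ncard = k := by
    simp [Set.ncard_eq_toFinset_card', Fin.card_filter_val_lt, hk]
  have hSc : {x : Fin n | (x : ℕ) < k}ᶜ.ncard = n - k := by
    rw [Set.ncard_compl, hS, Nat.card_fin]
  simpa only [hS, hSc, Nat.card_fin] using
    frobenius_induced_character_value_general {x : Fin n | (x : ℕ) < k} σ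
end
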